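/- Let 𝒳 be a finite alphabet and let P, Q be probability mass functions on 𝒳 with P(x) > 0 and Q(x) > 0 for all x, and P ≠ Q. Then the partial divergence ρ ↦ d_ρ(P‖Q) is strictly convex on [0,1]: for all ρ₁ ≠ ρ₂ in [0,1] and all λ ∈ (0,1), d_{λρ₁+(1−λ)ρ₂}(P‖Q) < λ·d_{ρ₁}(P‖Q) + (1−λ)·d_{ρ₂}(P‖Q). -/

import Mathlib

/-- A probability mass function on a finite alphabet. -/
def IsPMF {X : Type*} [Fintype X] (P : X → ℝ) : Prop :=
  (∀ x, 0 ≤ P x) ∧ ∑ x, P x = 1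

/-- Kullback–Leibler divergence (natural logarithm, with the convention
`0 · log (0/q) = 0`). -/
noncomputable def KLdiv {X : Type*} [Fintype X] (P Q : X → ℝ) : ℝ :=
  ∑ x, P x * Real.log (P x / Q x)

/-- Partial divergence between `P` and `Q` with mismatch ratio `ρ`. -/
noncomputable def partialDiv {X : Type*} [Fintype X] (ρ : ℝ) (P Q : X → ℝ) : ℝ :=
  sInf { v : ℝ | ∃ P₁ P₂ : X → ℝ, IsPMF P₁ ∧ IsPMF P₂ ∧
    (∀ x, ρ * P₁ x + (1 - ρ) * P₂ x = P x) ∧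
    v = ρ * KLdiv P₁ Q + (1 - ρ) * KLdiv P₂ P }

open Filter Topology in
theorem aux_term {q : ℝ} (hq : 0 < q) : StrictConvexOn ℝ (Set.Ici 0) (fun x : ℝ => x * Real.log (x / q)) := by
  have key : ∀ x : ℝ, x * Real.log (x / q) = x * Real.log x - x * Real.log q := by
    intro x
    rcases eq_or_ne x 0 with rfl | h
    · simp
    · rw [Real.log_div h hq.ne']; ring
  refine ⟨convex_Ici 0, ?_⟩
  intro x hx y hy hxy a b ha hb hab
  have h := Real.strictConvexOn_mul_log.2 hx hy hxy ha hb hab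
  simp only [key, smul_eq_mul] at h ⊢
  linarith

theorem aux_le {X : Type*} [Fintype X] {U V Q : X → ℝ} (hU : IsPMF U) (hV : IsPMF V)
    (hQ : ∀ x, 0 < Q x) {a b : ℝ} (ha : 0 ≤ a) (hb : 0 ≤ b) (hab : a + b = 1) :
    KLdiv (fun x => a * U x + b * V x) Q ≤ a * KLdiv U Q + b * KLdiv V Q := by
  unfold KLdiv
  rw [Finset.mul_sum, Finset.mul_sum, ← Finset.sum_add_distrib]
  exact Finset.sum_le_sum fun x _ =>
    (aux_term (hQ x)).convexOn.2 (hU.1 x) (hV.1 x) ha hb hab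

theorem aux_lt {X : Type*} [Fintype X] {U V Q : X → ℝ} (hU : IsPMF U) (hV : IsPMF V)
    (hQ : ∀ x, 0 < Q x) {a b : ℝ} (ha : 0 < a) (hb : 0 < b) (hab : a + b = 1) (hne : U ≠ V) :
    KLdiv (fun x => a * U x + b * V x) Q < a * KLdiv U Q + b * KLdiv V Q := by
  unfold KLdiv
  rw [Finset.mul_sum, Finset.mul_sum, ← Finset.sum_add_distrib]
  obtain ⟨x, hx⟩ := Function.ne_iff.1 hne
  exact Finset.sum_lt_sum (fun x _ =>
    (aux_term (hQ x)).convexOn.2 (hU.1 x) (hV.1 x) ha.le hb.le hab)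
    ⟨x, Finset.mem_univ x, (aux_term (hQ x)).2 (hU.1 x) (hV.1 x) hx ha hb hab⟩

theorem aux_pmf {X : Type*} [Fintype X] {U V : X → ℝ} (hU : IsPMF U) (hV : IsPMF V)
    {a b : ℝ} (ha : 0 ≤ a) (hb : 0 ≤ b) (hab : a + b = 1) :
    IsPMF (fun x => a * U x + b * V x) := by
  refine ⟨fun x => add_nonneg (mul_nonneg ha (hU.1 x)) (mul_nonneg hb (hV.1 x)), ?_⟩
  rw [Finset.sum_add_distrib, ← Finset.mul_sum, ← Finset.mul_sum, hU.2, hV.2]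
  linarith

theorem aux_self {X : Type*} [Fintype X] {P : X → ℝ} (hP : ∀ x, 0 < P x) : KLdiv P P = 0 := by
  unfold KLdiv
  exact Finset.sum_eq_zero fun x _ => by rw [div_self (hP x).ne']; simp

theorem aux_gibbs {X : Type*} [Fintype X] {U Q : X → ℝ} (hU : IsPMF U) (hQ : IsPMF Q)
    (hQp : ∀ x, 0 < Q x) : 0 ≤ KLdiv U Q := by
  have : ∑ x, (U x - Q x) ≤ KLdiv U Q := by
    refine Finset.sum_le_sum fun x _ => ?_
    rcases (hU.1 x).eq_or_lt with h | h
    · rw [← h]; have := hQp x; simp; linarith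
    · have h1 := Real.one_sub_inv_le_log_of_pos (div_pos h (hQp x))
      have h2 := mul_le_mul_of_nonneg_left h1 h.le
      have h3 : U x * (1 - (U x / Q x)⁻¹) = U x - Q x := by
        have := hQp x
        field_simp
      linarith
  rw [Finset.sum_sub_distrib, hU.2, hQ.2] at this
  linarith

theorem aux_gibbs_lt {X : Type*} [Fintype X] {U Q : X → ℝ} (hU : IsPMF U) (hQ : IsPMF Q)
    (hQp : ∀ x, 0 < Q x) (hne : U ≠ Q) : 0 < KLdiv U Q := by
  have h := aux_lt hU hQ hQp (a := 1/2) (b := 1/2) (by norm_num) (by norm_num) (by norm_num) hne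
  have h2 := aux_gibbs (aux_pmf hU hQ (a := 1/2) (b := 1/2) (by norm_num) (by norm_num)
    (by norm_num)) hQ hQp
  rw [aux_self hQp] at h
  linarith

theorem aux_chi {X : Type*} [Fintype X] {V P : X → ℝ} (hV : IsPMF V) (hP : IsPMF P)
    (hPp : ∀ x, 0 < P x) : KLdiv V P ≤ ∑ x, (V x - P x) ^ 2 / P x := by
  have h : KLdiv V P ≤ ∑ x, ((V x - P x) ^ 2 / P x + (V x - P x)) := by
    refine Finset.sum_le_sum fun x _ => ?_
    have hp := hPp x
    have e : (V x - P x) ^ 2 / P x + (V x - P x) = V x * (V x / P x - 1) := by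
      field_simp; ring
    rw [e]
    rcases (hV.1 x).eq_or_lt with h | h
    · rw [← h]; simp
    · exact mul_le_mul_of_nonneg_left (Real.log_le_sub_one_of_pos (div_pos h hp)) h.le
  rw [Finset.sum_add_distrib, Finset.sum_sub_distrib, hV.2, hP.2] at h
  linarith

theorem aux_perturb {X : Type*} [Fintype X] {P Q : X → ℝ}
    (hP : IsPMF P) (hQ : IsPMF Q)
    (hPpos : ∀ x, 0 < P x) (hQpos : ∀ x, 0 < Q x) (hne : P ≠ Q) {r : ℝ} (h0 : 0 < r) (h1 : r < 1) :
    ∃ U V : X → ℝ, IsPMF U ∧ IsPMF V ∧ (∀ x, r * U x + (1 - r) * V x = P x) ∧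
      r * KLdiv U Q + (1 - r) * KLdiv V P < r * KLdiv P Q := by
  have hD := aux_gibbs_lt hP hQ hQpos hne
  have h1' : 0 < 1 - r := by linarith
  set c := ∑ x, (P x - Q x) ^ 2 / P x with hc
  have tend : ∀ k : ℝ, Filter.Tendsto (fun s : ℝ => s * k) (nhdsWithin 0 (Set.Ioi 0)) (nhds 0) := by
    intro k
    have : Filter.Tendsto (fun s : ℝ => s * k) (nhds 0) (nhds (0 * k)) :=
      (continuous_id.mul continuous_const).tendsto 0
    rw [zero_mul] at this
    exact this.mono_left nhdsWithin_le_nhds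
  have e1 := (tend ((1 - r) / r)).eventually (gt_mem_nhds (zero_lt_one))
  have e2 := (tend c).eventually (gt_mem_nhds hD)
  have e3 : ∀ᶠ s in nhdsWithin (0:ℝ) (Set.Ioi 0), ∀ x, s * Q x < P x :=
    Filter.eventually_all.2 fun x => (tend (Q x)).eventually (gt_mem_nhds (hPpos x))
  obtain ⟨s, ⟨⟨⟨hs1, hs2⟩, hs3⟩, hs0⟩⟩ := (((e1.and e2).and e3).and self_mem_nhdsWithin).exists
  have hs0 : 0 < s := hs0
  set t := s * ((1 - r) / r) with ht
  have ht0 : 0 < t := by positivity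
  have hrt : r * t = s * (1 - r) := by rw [ht]; field_simp
  have hV : IsPMF (fun x => P x + s * (P x - Q x)) := by
    refine ⟨fun x => ?_, ?_⟩
    · have := hs3 x
      have := mul_pos hs0 (hPpos x)
      simp only
      linarith
    · rw [Finset.sum_add_distrib, ← Finset.mul_sum, Finset.sum_sub_distrib, hP.2, hQ.2]; ring
  refine ⟨fun x => (1 - t) * P x + t * Q x, fun x => P x + s * (P x - Q x),
    aux_pmf hP hQ (by linarith) ht0.le (by ring), hV, ?_, ?_⟩
  · intro x
    simp only
    linear_combination (Q x - P x) * hrt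
  · have hU := aux_le hP hQ hQpos (a := 1 - t) (b := t) (by linarith) ht0.le (by ring)
    rw [aux_self hQpos] at hU
    have hV' := aux_chi hV hP hPpos
    have e : ∑ x, (P x + s * (P x - Q x) - P x) ^ 2 / P x = s ^ 2 * c := by
      rw [hc, Finset.mul_sum]
      exact Finset.sum_congr rfl fun x _ => by ring
    rw [e] at hV'
    have a1 := mul_le_mul_of_nonneg_left hU h0.le
    have a2 := mul_le_mul_of_nonneg_left hV' h1'.le
    have a3 := mul_lt_mul_of_pos_left hs2 (mul_pos hs0 h1')
    have a4 : r * ((1 - t) * KLdiv P Q + t * 0) = r * KLdiv P Q - s * (1 - r) * KLdiv P Q := by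
      rw [← hrt]; ring
    nlinarith

theorem aux_cont {X : Type*} [Fintype X] (Q : X → ℝ) (hQ : ∀ x, 0 < Q x) :
    Continuous (fun U : X → ℝ => KLdiv U Q) := by
  unfold KLdiv
  refine continuous_finsetSum _ fun x _ => ?_
  have e : (fun U : X → ℝ => U x * Real.log (U x / Q x)) =
      fun U => Q x * ((U x / Q x) * Real.log (U x / Q x)) := by
    funext U
    have := hQ x
    field_simp
  rw [e]
  exact continuous_const.mul
    (Real.continuous_mul_log.comp ((continuous_apply x).div_const _))

theorem aux_bdd {X : Type*} [Fintype X] {P Q : X → ℝ}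
    (hP : IsPMF P) (hQ : IsPMF Q)
    (hPpos : ∀ x, 0 < P x) (hQpos : ∀ x, 0 < Q x) {r : ℝ} (h0 : 0 ≤ r) (h1 : r ≤ 1)
    {U V : X → ℝ} (hU : IsPMF U) (hV : IsPMF V) (h : ∀ x, r * U x + (1 - r) * V x = P x) :
    partialDiv r P Q ≤ r * KLdiv U Q + (1 - r) * KLdiv V P := by
  refine csInf_le ⟨0, ?_⟩ ⟨U, V, hU, hV, h, rfl⟩
  rintro v ⟨U, V, hU, hV, -, rfl⟩
  have := aux_gibbs hU hQ hQpos
  have := aux_gibbs hV hP hPpos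
  have : 0 ≤ 1 - r := by linarith
  positivity

theorem aux_min {X : Type*} [Fintype X] {P Q : X → ℝ}
    (hP : IsPMF P)
    (hPpos : ∀ x, 0 < P x) (hQpos : ∀ x, 0 < Q x) (r : ℝ) :
    ∃ U V : X → ℝ, IsPMF U ∧ IsPMF V ∧ (∀ x, r * U x + (1 - r) * V x = P x) ∧
      partialDiv r P Q = r * KLdiv U Q + (1 - r) * KLdiv V P := by
  have hcomp : IsCompact (((stdSimplex ℝ X) ×ˢ (stdSimplex ℝ X)) ∩
      {w : (X → ℝ) × (X → ℝ) | ∀ x, r * w.1 x + (1 - r) * w.2 x = P x}) := by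
    refine ((isCompact_stdSimplex ℝ X).prod (isCompact_stdSimplex ℝ X)).inter_right ?_
    simp only [Set.setOf_forall]
    refine isClosed_iInter fun x => isClosed_eq ?_ continuous_const
    fun_prop
  have hf : Continuous (fun w : (X → ℝ) × (X → ℝ) => r * KLdiv w.1 Q + (1 - r) * KLdiv w.2 P) :=
    (continuous_const.mul ((aux_cont Q hQpos).comp continuous_fst)).add
      (continuous_const.mul ((aux_cont P hPpos).comp continuous_snd))
  obtain ⟨w, hw, hmin⟩ := hcomp.exists_isMinOn ⟨(P, P), ⟨⟨hP, hP⟩, fun x => by simp; ring⟩⟩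
    hf.continuousOn
  refine ⟨w.1, w.2, hw.1.1, hw.1.2, hw.2, ?_⟩
  refine IsLeast.csInf_eq ⟨⟨w.1, w.2, hw.1.1, hw.1.2, hw.2, rfl⟩, ?_⟩
  rintro v ⟨U, V, hU, hV, h, rfl⟩
  exact hmin (show (U, V) ∈ _ from ⟨⟨hU, hV⟩, h⟩)

theorem aux_main {X : Type*} [Fintype X] {P Q : X → ℝ}
    (hP : IsPMF P) (hQ : IsPMF Q)
    (hPpos : ∀ x, 0 < P x) (hQpos : ∀ x, 0 < Q x) (hne : P ≠ Q)
    {r s l : ℝ} (hr : 0 ≤ r) (hrs : r < s) (hs : s ≤ 1) (hl0 : 0 < l) (hl1 : l < 1) :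
    partialDiv (l * r + (1 - l) * s) P Q < l * partialDiv r P Q + (1 - l) * partialDiv s P Q := by
  obtain ⟨U1, V1, hU1, hV1, hc1, e1⟩ := aux_min (Q := Q) hP hPpos hQpos r
  obtain ⟨U2, V2, hU2, hV2, hc2, e2⟩ := aux_min (Q := Q) hP hPpos hQpos s
  rw [e1, e2]
  have hl1' : 0 < 1 - l := by linarith
  have hs0 : 0 < s := by linarith
  have hr1 : 0 < 1 - r := by linarith
  have hs1 : 0 ≤ 1 - s := by linarith
  set m := l * r + (1 - l) * s with hm
  have hm0 : 0 < m := by positivity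
  have hm1e : 1 - m = l * (1 - r) + (1 - l) * (1 - s) := by rw [hm]; ring
  have hm1 : 0 < 1 - m := by rw [hm1e]; positivity
  set a := l * r / m with ha
  set b := (1 - l) * s / m with hb
  set a' := l * (1 - r) / (1 - m) with ha'
  set b' := (1 - l) * (1 - s) / (1 - m) with hb'
  have ma : m * a = l * r := by rw [ha]; field_simp
  have mb : m * b = (1 - l) * s := by rw [hb]; field_simp
  have ma' : (1 - m) * a' = l * (1 - r) := by rw [ha']; field_simp
  have mb' : (1 - m) * b' = (1 - l) * (1 - s) := by rw [hb']; field_simp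
  have hab : a + b = 1 := by rw [ha, hb, ← add_div, ← hm, div_self hm0.ne']
  have hab' : a' + b' = 1 := by rw [ha', hb', ← add_div, ← hm1e, div_self hm1.ne']
  have ha0 : 0 ≤ a := by positivity
  have hb0 : 0 < b := by positivity
  have ha0' : 0 < a' := by positivity
  have hb0' : 0 ≤ b' := by positivity
  have hM1 := aux_pmf hU1 hU2 ha0 hb0.le hab
  have hM2 := aux_pmf hV1 hV2 ha0'.le hb0' hab'
  have hc : ∀ x, m * (a * U1 x + b * U2 x) + (1 - m) * (a' * V1 x + b' * V2 x) = P x := by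
    intro x
    linear_combination U1 x * ma + U2 x * mb + V1 x * ma' + V2 x * mb' + l * hc1 x
      + (1 - l) * hc2 x
  have hle := aux_bdd hP hQ hPpos hQpos hm0.le (by linarith) hM1 hM2 hc
  have k1 := mul_le_mul_of_nonneg_left (aux_le hU1 hU2 hQpos ha0 hb0.le hab) hm0.le
  have k2 := mul_le_mul_of_nonneg_left (aux_le hV1 hV2 hPpos ha0'.le hb0' hab') hm1.le
  have f1 : m * (a * KLdiv U1 Q + b * KLdiv U2 Q) =
      l * r * KLdiv U1 Q + (1 - l) * s * KLdiv U2 Q := by rw [← ma, ← mb]; ring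
  have f2 : (1 - m) * (a' * KLdiv V1 P + b' * KLdiv V2 P) =
      l * (1 - r) * KLdiv V1 P + (1 - l) * (1 - s) * KLdiv V2 P := by rw [← ma', ← mb']; ring
  by_cases c1 : r = 0 ∨ U1 = U2
  swap
  · push Not at c1
    have hr0 : 0 < r := lt_of_le_of_ne hr c1.1.symm
    have k := mul_lt_mul_of_pos_left
      (aux_lt hU1 hU2 hQpos (show 0 < a by positivity) hb0 hab c1.2) hm0
    linarith
  by_cases c2 : s = 1 ∨ V1 = V2
  swap
  · push Not at c2
    have hs0 : 0 < 1 - s := by linarith [lt_of_le_of_ne hs c2.1]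
    have k := mul_lt_mul_of_pos_left
      (aux_lt hV1 hV2 hPpos ha0' (show 0 < b' by positivity) hab' c2.2) hm1
    linarith
  have g1 : (fun x => a * U1 x + b * U2 x) = P := by
    funext x
    have q1 := hc1 x
    have q2 := hc2 x
    apply mul_left_cancel₀ hm0.ne'
    have q3 : m * (a * U1 x + b * U2 x) = l * r * U1 x + (1 - l) * s * U2 x := by
      rw [← ma, ← mb]; ring
    rw [q3, hm]
    have hU2P : U2 x = P x := by
      rcases c2 with c2 | c2
      · rw [c2] at q2; linarith
      · rw [← c2] at q2
        rcases c1 with c1 | c1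
        · rw [c1] at q1
          apply mul_left_cancel₀ hs0.ne'
          linear_combination q2 - (1 - s) * q1
        · rw [c1] at q1
          apply mul_left_cancel₀ (sub_pos.2 hrs).ne'
          linear_combination (1 - r) * q2 - (1 - s) * q1
    rcases c1 with c1 | c1
    · rw [c1, hU2P]; ring
    · rw [c1, hU2P]; ring
  obtain ⟨U, V, hU, hV, hcc, hlt⟩ := aux_perturb hP hQ hPpos hQpos hne hm0 (by linarith)
  have hle' := aux_bdd hP hQ hPpos hQpos hm0.le (by linarith) hU hV hcc
  rw [g1] at k1
  have k3 := mul_nonneg hm1.le (aux_gibbs hM2 hP hPpos)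
  linarith

/-- If `P, Q > 0` pointwise and `P ≠ Q`, then `ρ ↦ d_ρ(P‖Q)` is strictly convex on `[0,1]`. -/
theorem partialDiv_strictConvex {X : Type*} [Fintype X] (P Q : X → ℝ)
    (hP : IsPMF P) (hQ : IsPMF Q)
    (hPpos : ∀ x, 0 < P x) (hQpos : ∀ x, 0 < Q x) (hne : P ≠ Q) :
    ∀ ρ₁ ∈ Set.Icc (0 : ℝ) 1, ∀ ρ₂ ∈ Set.Icc (0 : ℝ) 1, ρ₁ ≠ ρ₂ →
      ∀ l ∈ Set.Ioo (0 : ℝ) 1,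
        partialDiv (l * ρ₁ + (1 - l) * ρ₂) P Q <
          l * partialDiv ρ₁ P Q + (1 - l) * partialDiv ρ₂ P Q := by
  intro r hr s hs hrs l hl
  rcases lt_or_gt_of_ne hrs with h | h
  · exact aux_main hP hQ hPpos hQpos hne hr.1 h hs.2 hl.1 hl.2
  · have := aux_main hP hQ hPpos hQpos hne (l := 1 - l) hs.1 h hr.2 (by linarith [hl.2])
      (by linarith [hl.1])
    rw [show (1 - l) * s + (1 - (1 - l)) * r = l * r + (1 - l) * s by ring] at this
    linarith
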